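/- arXiv:1705.00133 — 2 statements merged into one kernel-verified Lean document; each statement's English description precedes it below -/
import Mathlib

section
/- (Mapping lemma.) Let μ₁ ∈ SubDist(A₁), μ₂ ∈ SubDist(A₂), f₁ : A₁ → B₁, f₂ : A₂ → B₂, and R a relation on B₁ × B₂. Define S by a₁ S a₂ ⟺ f₁(a₁) R f₂(a₂). Then, for all X ⊆ B₁: pushforward f₁⋆μ₁ satisfies (f₁⋆μ₁)[X] ≤ e^ε (f₂⋆μ₂)[R(X)] + δ for all X if and only if μ₁[Y] ≤ e^ε μ₂[S(Y)] + δ for all Y ⊆ A₁. (No surjectivity assumption on f₁, f₂ is needed.) -/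
open scoped ENNReal

noncomputable section

def mass {A : Type*} (μ : A → ℝ≥0∞) (X : Set A) : ℝ≥0∞ := ∑' x : X, μ x

def SubDist {A : Type*} (μ : A → ℝ≥0∞) : Prop := mass μ Set.univ ≤ 1

def dpDiv {B : Type*} (ε : ℝ) (μ ν : B → ℝ≥0∞) : ℝ≥0∞ :=
  ⨆ E : Set B, (mass μ E - ENNReal.ofReal (Real.exp ε) * mass ν E)

def relImage {A B : Type*} (R : A → B → Prop) (X : Set A) : Set B :=
  {b | ∃ a ∈ X, R a b}

def extL {A B : Type*} (η : A × Option B → ℝ≥0∞) : Option A × Option B → ℝ≥0∞ :=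
  fun p => p.1.elim 0 (fun a => η (a, p.2))

def extR {A B : Type*} (η : Option A × B → ℝ≥0∞) : Option A × Option B → ℝ≥0∞ :=
  fun p => p.2.elim 0 (fun b => η (p.1, b))

/-- The conditions for a pair `(ηL, ηR)` to witness an `(ε,δ)`-approximate ⋆-lifting
of `μ₁` and `μ₂` for the relation `R`.  Here `⋆` is represented by `none`. -/
def IsStarWitness {A B : Type*} (ε δ : ℝ) (μ₁ : A → ℝ≥0∞) (μ₂ : B → ℝ≥0∞)
    (R : A → B → Prop) (ηL : A × Option B → ℝ≥0∞) (ηR : Option A × B → ℝ≥0∞) : Prop :=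
  SubDist ηL ∧ SubDist ηR ∧
  (∀ a, (∑' b : Option B, ηL (a, b)) = μ₁ a) ∧
  (∀ b, (∑' a : Option A, ηR (a, b)) = μ₂ b) ∧
  (∀ a b, ηL (a, some b) ≠ 0 → R a b) ∧
  (∀ a b, ηR (some a, b) ≠ 0 → R a b) ∧
  dpDiv ε (extL ηL) (extR ηR) ≤ ENNReal.ofReal δ

/-- Existence of an `(ε,δ)`-approximate ⋆-lifting. -/
def StarLift {A B : Type*} (ε δ : ℝ) (μ₁ : A → ℝ≥0∞) (μ₂ : B → ℝ≥0∞)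
    (R : A → B → Prop) : Prop :=
  ∃ ηL ηR, IsStarWitness ε δ μ₁ μ₂ R ηL ηR

/-- Pushforward of a sub-distribution along a map. -/
def push {A B : Type*} (f : A → B) (μ : A → ℝ≥0∞) : B → ℝ≥0∞ :=
  fun b => mass μ {a | f a = b}

theorem mass_eq_tsum_indicator {A : Type*} (μ : A → ℝ≥0∞) (X : Set A) :
    mass μ X = ∑' a, X.indicator μ a :=
  tsum_subtype X μ

theorem mass_mono {A : Type*} (μ : A → ℝ≥0∞) {X Y : Set A} (h : X ⊆ Y) :
    mass μ X ≤ mass μ Y :=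
  ENNReal.tsum_mono_subtype μ h

open scoped Classical in
theorem mass_push {A B : Type*} (f : A → B) (μ : A → ℝ≥0∞) (X : Set B) :
    mass (push f μ) X = mass μ (f ⁻¹' X) := by
  have h : ∀ b : B, X.indicator (push f μ) b
      = ∑' a, if f a = b ∧ b ∈ X then μ a else 0 := by
    intro b
    by_cases hb : b ∈ X <;>
      simp [hb, push, mass_eq_tsum_indicator, Set.indicator_apply]
  rw [mass_eq_tsum_indicator, mass_eq_tsum_indicator, tsum_congr h, ENNReal.tsum_comm]
  refine tsum_congr fun a => ?_
  rw [tsum_eq_single (f a) fun b hb => if_neg fun h => hb h.1.symm]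
  simp [Set.indicator_apply]

theorem preimage_relImage_image {A₁ A₂ B₁ B₂ : Type*} (f₁ : A₁ → B₁) (f₂ : A₂ → B₂)
    (R : B₁ → B₂ → Prop) (Y : Set A₁) :
    f₂ ⁻¹' relImage R (f₁ '' Y) = relImage (fun a₁ a₂ => R (f₁ a₁) (f₂ a₂)) Y := by
  ext a
  simp [relImage]

theorem relImage_mono {A B : Type*} (R : A → B → Prop) {X Y : Set A} (h : X ⊆ Y) :
    relImage R X ⊆ relImage R Y :=
  fun _ ⟨a, ha, hR⟩ => ⟨a, h ha, hR⟩

theorem mapping_lemma {A₁ A₂ B₁ B₂ : Type*}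
    (μ₁ : A₁ → ℝ≥0∞) (μ₂ : A₂ → ℝ≥0∞) (h₁ : SubDist μ₁) (h₂ : SubDist μ₂)
    (f₁ : A₁ → B₁) (f₂ : A₂ → B₂) (R : B₁ → B₂ → Prop)
    (ε δ : ℝ) (hε : 0 ≤ ε) (hδ : 0 ≤ δ) :
    (∀ X : Set B₁,
        mass (push f₁ μ₁) X
          ≤ ENNReal.ofReal (Real.exp ε) * mass (push f₂ μ₂) (relImage R X)
            + ENNReal.ofReal δ)
    ↔ (∀ Y : Set A₁,
        mass μ₁ Y
          ≤ ENNReal.ofReal (Real.exp ε)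
              * mass μ₂ (relImage (fun a₁ a₂ => R (f₁ a₁) (f₂ a₂)) Y)
            + ENNReal.ofReal δ) := by
  simp only [mass_push, ← preimage_relImage_image]
  constructor
  · intro h Y
    exact (mass_mono μ₁ (Set.subset_preimage_image f₁ Y)).trans (h (f₁ '' Y))
  · intro h X
    refine (h (f₁ ⁻¹' X)).trans ?_
    gcongr
    exact mass_mono μ₂ (Set.preimage_mono (relImage_mono R (Set.image_preimage_subset f₁ X)))
end
end

section
/- (One-sided conjunction with events.) Let μ₁ ∈ SubDist(A), μ₂ ∈ SubDist(B), θ_a ⊆ A, R ⊆ A × B. If for all X ⊆ A, μ₁[X] ≤ e^ε μ₂[R(X)] + δ, then for all X ⊆ A, μ₁[X] ≤ e^ε μ₂[(θ_{a,◁} ∩ R)(X)] + δ + μ₁[A∖θ_a], where θ_{a,◁} ∩ R = {(a,b) ∈ R : a ∈ θ_a}. -/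
open scoped ENNReal

noncomputable section

theorem one_sided_conjunction {A B : Type*} [Countable A] [Countable B]
    (μ₁ : A → ℝ≥0∞) (μ₂ : B → ℝ≥0∞) (h₁ : SubDist μ₁) (h₂ : SubDist μ₂)
    (θa : Set A) (R : A → B → Prop) (ε δ : ℝ) (hε : 0 ≤ ε) (hδ : 0 ≤ δ)
    (h : ∀ X : Set A,
      mass μ₁ X ≤ ENNReal.ofReal (Real.exp ε) * mass μ₂ (relImage R X) + ENNReal.ofReal δ) :
    ∀ X : Set A,
      mass μ₁ X ≤ ENNReal.ofReal (Real.exp ε)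
          * mass μ₂ (relImage (fun a b => a ∈ θa ∧ R a b) X)
        + ENNReal.ofReal δ + mass μ₁ θaᶜ := by
  intro X
  have hX : X ⊆ (X ∩ θa) ∪ θaᶜ := fun a ha => by
    by_cases hθ : a ∈ θa
    · exact Or.inl ⟨ha, hθ⟩
    · exact Or.inr hθ
  have himage : relImage R (X ∩ θa) = relImage (fun a b => a ∈ θa ∧ R a b) X := by
    ext b
    simp only [relImage, Set.mem_ofPred_eq, Set.mem_inter_iff, and_assoc]
  calc mass μ₁ X ≤ mass μ₁ ((X ∩ θa) ∪ θaᶜ) := ENNReal.tsum_mono_subtype μ₁ hX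
    _ ≤ mass μ₁ (X ∩ θa) + mass μ₁ θaᶜ := ENNReal.tsum_union_le μ₁ _ _
    _ ≤ _ := by
      rw [← himage]
      gcongr
      exact h (X ∩ θa)
end
end
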